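/- Let {f_α}_{α∈A} : 𝒮_X → 𝒮_Y be a morphism between two πτ-spectra 𝒮_X = {X_α, p_α^β, A} and 𝒮_Y = {Y_α, π_α^β, A} with surjective limit projections, and suppose the limit map lim f_α : lim 𝒮_X → lim 𝒮_Y is skeletal. Then the set B = {α ∈ A : the limit ↓α-square of the morphism is skeletal} is cofinal in A. -/

import Mathlib

open Set Topology

universe u

/-- A continuous map `f : X → Y` is *skeletal* if for every non-empty open `U ⊆ X` the
closure of `f(U)` has non-empty interior. -/
def Skeletal {X Y : Type*} [TopologicalSpace X] [TopologicalSpace Y] (f : X → Y) : Prop :=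
  ∀ U : Set X, IsOpen U → U.Nonempty → (interior (closure (f '' U))).Nonempty

/-- A commutative square (top map `g' : X' → Y'`, bottom map `g : X → Y`, vertical maps
`qX : X' → X`, `qY : Y' → Y`) is *skeletal* if for each point `x ∈ X` and each neighborhood
`U` of `x` there is a non-empty open `V ⊆ Y` with `V ⊆ cl (g '' U)` and
`qY ⁻¹' V ⊆ cl (g' '' (qX ⁻¹' U))`. -/
def SkeletalSquare {X Y X' Y' : Type*} [TopologicalSpace X] [TopologicalSpace Y]
    [TopologicalSpace X'] [TopologicalSpace Y']
    (g' : X' → Y') (g : X → Y) (qX : X' → X) (qY : Y' → Y) : Prop :=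
  ∀ x : X, ∀ U ∈ 𝓝 x, ∃ V : Set Y, IsOpen V ∧ V.Nonempty ∧ V ⊆ closure (g '' U) ∧
    qY ⁻¹' V ⊆ closure (g' '' (qX ⁻¹' U))

/-- An *inverse spectrum* over a partially ordered index set `A`: topological spaces `X a`
together with continuous bonding maps `bond h : X b → X a` for `h : a ≤ b`, satisfying the
usual identity and composition laws. -/
structure InvSpec (A : Type u) [PartialOrder A] : Type (u + 1) where
  X : A → Type u
  [topX : ∀ a, TopologicalSpace (X a)]
  bond : ∀ {a b : A}, a ≤ b → X b → X a
  bond_cont : ∀ {a b : A} (h : a ≤ b), Continuous (bond h)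
  bond_refl : ∀ (a : A) (x : X a), bond le_rfl x = x
  bond_comp : ∀ {a b c : A} (hab : a ≤ b) (hbc : b ≤ c) (x : X c),
    bond hab (bond hbc x) = bond (hab.trans hbc) x

attribute [instance] InvSpec.topX

variable {A : Type u} [PartialOrder A]

/-- The limit `lim 𝒮` of an inverse spectrum, as the set of threads in the product. -/
def InvSpec.limitSet (S : InvSpec A) : Set (∀ a, S.X a) :=
  {x | ∀ (a b : A) (h : a ≤ b), S.bond h (x b) = x a}

/-- The limit projection `p_a : lim 𝒮 → X a`. -/
def InvSpec.proj (S : InvSpec A) (a : A) : S.limitSet → S.X a := fun x => x.1 a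

/-- A *morphism* between two inverse spectra over the same index set: a family of continuous
maps `f a : X a → Y a` commuting with the bonding maps. -/
structure SpecMor (S T : InvSpec A) where
  maps : ∀ a, S.X a → T.X a
  maps_cont : ∀ a, Continuous (maps a)
  comm : ∀ {a b : A} (h : a ≤ b) (x : S.X b), maps a (S.bond h x) = T.bond h (maps b x)

/-- The limit map `lim f_a : lim 𝒮_X → lim 𝒮_Y` of a morphism of spectra. -/
def SpecMor.limMap {S T : InvSpec A} (F : SpecMor S T) : S.limitSet → T.limitSet :=
  fun x => ⟨fun a => F.maps a (x.1 a),
    fun a b h => by rw [← F.comm h (x.1 b), x.2 a b h]⟩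

/-- The *limit `↓a`-square* of a morphism (top map `lim f`, bottom map `f a`, verticals the
limit projections) is skeletal. -/
def LimitSquareSkeletal {S T : InvSpec A} (F : SpecMor S T) (a : A) : Prop :=
  SkeletalSquare F.limMap (F.maps a) (S.proj a) (T.proj a)

/-- The *bonding `↓_a^b`-square* of a morphism (top map `f b`, bottom map `f a`, verticals
the bonding maps) is skeletal. -/
def BondingSquareSkeletal {S T : InvSpec A} (F : SpecMor S T) {a b : A} (h : a ≤ b) : Prop :=
  SkeletalSquare (F.maps b) (F.maps a) (S.bond h) (T.bond h)

/-- A family of non-empty open sets is a *π-base* if every non-empty open set contains a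
member of the family. -/
def IsPiBase {Z : Type*} [TopologicalSpace Z] (B : Set (Set Z)) : Prop :=
  (∀ U ∈ B, IsOpen U ∧ U.Nonempty) ∧
  ∀ U : Set Z, IsOpen U → U.Nonempty → ∃ V ∈ B, V ⊆ U

/-- The *π-weight* of a space: the smallest cardinality of a π-base. -/
noncomputable def piWeight (Z : Type u) [TopologicalSpace Z] : Cardinal.{u} :=
  ⨅ B : {B : Set (Set Z) // IsPiBase B}, Cardinal.mk B.1

/-- A partially ordered set is *κ-directed* if every subset of cardinality `≤ κ` has an
upper bound. -/
def CardDirected (A : Type u) [PartialOrder A] (κ : Cardinal.{u}) : Prop :=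
  ∀ K : Set A, Cardinal.mk K ≤ κ → ∃ ub : A, ∀ k ∈ K, k ≤ ub

/-- A partially ordered set is *ω-complete* if every (non-empty) countable chain has a least
upper bound. -/
def OmegaComplete (A : Type u) [PartialOrder A] : Prop :=
  ∀ C : Set A, C.Countable → C.Nonempty → IsChain (· ≤ ·) C → ∃ b : A, IsLUB C b

/-- The limit of the restriction of a spectrum to a subset `C` of the index set. -/
def InvSpec.limitSetOn (S : InvSpec A) (C : Set A) : Set (∀ c : C, S.X c) :=
  {x | ∀ (c d : C) (h : (c : A) ≤ (d : A)), S.bond h (x d) = x c}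

/-- The canonical map `X g → lim {X a, a ∈ C}` when `g` is a least upper bound of `C`. -/
def InvSpec.toLimitOn (S : InvSpec A) {C : Set A} {g : A} (hg : IsLUB C g) :
    S.X g → S.limitSetOn C :=
  fun xg => ⟨fun c => S.bond (hg.1 c.2) xg, fun c d h => S.bond_comp h (hg.1 d.2) xg⟩

/-- A spectrum is *continuous* (τ-continuous) if for every non-empty directed subset `C` of
the index set having a least upper bound `g`, the canonical map `X g → lim {X a, a ∈ C}` is
a homeomorphism. -/
def InvSpec.IsContinuousSpectrum (S : InvSpec A) : Prop :=
  ∀ (C : Set A) (g : A), C.Nonempty → DirectedOn (· ≤ ·) C → ∀ hg : IsLUB C g,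
    IsHomeomorph (S.toLimitOn hg)

/-- A *πτ-spectrum*: all spaces have π-weight `≤ τ`, the index set is τ-directed and
ω-complete, and the spectrum is τ-continuous. -/
def IsPiTauSpectrum (τ : Cardinal.{u}) (S : InvSpec A) : Prop :=
  (∀ a : A, piWeight (S.X a) ≤ τ) ∧ CardDirected A τ ∧ OmegaComplete A ∧
    S.IsContinuousSpectrum

/-- A subset `C` of a directed poset is *cofinal* if every element of the poset is below
some element of `C`. -/
def IsCofinalSub {A : Type u} [PartialOrder A] (C : Set A) : Prop :=
  ∀ a : A, ∃ b ∈ C, a ≤ b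

/-- A subset `C` is *τ-closed* (equivalently ω-closed) if for each (non-empty) directed
subset `D ⊆ C` having a least upper bound in `A`, this least upper bound belongs to `C`. -/
def IsSupClosed {A : Type u} [PartialOrder A] (C : Set A) : Prop :=
  ∀ D ⊆ C, D.Nonempty → DirectedOn (· ≤ ·) D → ∀ g : A, IsLUB D g → g ∈ C

/-! Starting at any index, iterate: an index `a` is followed by some `b ≥ a` such that, for every
nonempty open `U ⊆ X a`, the skeletality of the limit map at `p_a⁻¹(U)` is witnessed by an open
subset of `Y b`. Such a `b` exists because it suffices to treat the at most `τ` members of a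
π-base of `X a`. At the supremum `g` of the resulting sequence, continuity of the spectrum says
that the open sets of `X g` come from earlier indices, whose witnesses live at the next index,
hence below `g`. -/

theorem subset_closure_image_of_preimage_subset_closure_image {X Y X' Y' : Type*}
    [TopologicalSpace Y] [TopologicalSpace Y'] {g' : X' → Y'} {g : X → Y} {qX : X' → X}
    {qY : Y' → Y} (hcomm : qY ∘ g' = g ∘ qX) (hqY : Continuous qY) (hrange : DenseRange qY)
    {U : Set X} {V : Set Y} (hV : IsOpen V) (hVU : qY ⁻¹' V ⊆ closure (g' '' (qX ⁻¹' U))) :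
    V ⊆ closure (g '' U) :=
  calc
    V ⊆ closure (qY '' (qY ⁻¹' V)) := hrange.subset_closure_image_preimage_of_isOpen hV
    _ ⊆ closure (qY '' closure (g' '' (qX ⁻¹' U))) := closure_mono (image_mono hVU)
    _ = closure (qY '' (g' '' (qX ⁻¹' U))) := closure_image_closure hqY
    _ = closure (g '' (qX '' (qX ⁻¹' U))) := by rw [← image_comp, hcomm, image_comp]
    _ ⊆ closure (g '' U) := closure_mono (image_mono (image_preimage_subset qX U))

theorem exists_isPiBase_mk_eq_piWeight (Z : Type u) [TopologicalSpace Z] :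
    ∃ P : Set (Set Z), IsPiBase P ∧ Cardinal.mk P = piWeight Z := by
  have : Nonempty {B : Set (Set Z) // IsPiBase B} :=
    ⟨{U | IsOpen U ∧ U.Nonempty}, fun _ hU => hU, fun U hU hne => ⟨U, ⟨hU, hne⟩, subset_rfl⟩⟩
  obtain ⟨⟨P, hP⟩, hcard⟩ := ciInf_mem fun B : {B : Set (Set Z) // IsPiBase B} => Cardinal.mk B.1
  exact ⟨P, hP, hcard⟩

theorem CardDirected.isDirectedOrder {κ : Cardinal.{u}} (hA : CardDirected A κ) (hκ : 2 ≤ κ) :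
    IsDirectedOrder A where
  directed a b := by
    have hpair : Cardinal.mk ({a, b} : Set A) ≤ 2 :=
      Cardinal.mk_insert_le.trans_eq (by rw [Cardinal.mk_singleton, one_add_one_eq_two])
    obtain ⟨c, hc⟩ := hA {a, b} (hpair.trans hκ)
    exact ⟨c, hc a (by simp), hc b (by simp)⟩

theorem OmegaComplete.exists_isLUB_range_of_forall_exists_ge (hA : OmegaComplete A)
    {r : A → A → Prop} (hr : ∀ a, ∃ b, a ≤ b ∧ r a b) (a : A) :
    ∃ (s : ℕ → A) (g : A), Monotone s ∧ s 0 = a ∧ (∀ n, r (s n) (s (n + 1))) ∧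
      IsLUB (range s) g := by
  choose next hle hnext using hr
  let s : ℕ → A := fun n => next^[n] a
  have hs (n : ℕ) : s (n + 1) = next (s n) := Function.iterate_succ_apply' next n a
  have hmono : Monotone s := monotone_nat_of_le_succ fun n => (hle (s n)).trans_eq (hs n).symm
  obtain ⟨g, hg⟩ := hA (range s) (countable_range s) (range_nonempty s) hmono.isChain_range
  exact ⟨s, g, hmono, rfl, fun n => hs n ▸ hnext (s n), hg⟩

namespace InvSpec

variable (S : InvSpec A)

theorem continuous_proj (a : A) : Continuous (S.proj a) :=
  (continuous_apply a).comp continuous_subtype_val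

theorem bond_proj {a b : A} (h : a ≤ b) (x : S.limitSet) : S.bond h (S.proj b x) = S.proj a x :=
  x.2 a b h

theorem proj_preimage_bond_preimage {a b : A} (h : a ≤ b) (V : Set (S.X a)) :
    S.proj b ⁻¹' (S.bond h ⁻¹' V) = S.proj a ⁻¹' V := by
  ext x
  simp only [mem_preimage, bond_proj]

theorem hasBasis_nhds_of_isInducing {ι Z : Type*} [Nonempty ι] [TopologicalSpace Z] {φ : ι → A}
    (hφ : Directed (· ≤ ·) φ) {e : Z → ∀ i, S.X (φ i)} (he : IsInducing e)
    (hcomp : ∀ (i j : ι) (h : φ i ≤ φ j) (z : Z), S.bond h (e z j) = e z i) (z : Z) :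
    (𝓝 z).HasBasis (fun p : Σ i, Set (S.X (φ i)) => e z p.1 ∈ p.2 ∧ IsOpen p.2)
      fun p => (e · p.1) ⁻¹' p.2 := by
  have hnhds : 𝓝 z = ⨅ i, (𝓝 (e z i)).comap (e · i) := by
    simp only [he.nhds_eq_comap, nhds_pi, Filter.pi, Filter.comap_iInf, Filter.comap_comap,
      Function.comp_def]
  have hanti (i j : ι) (h : φ i ≤ φ j) :
      (𝓝 (e z j)).comap (e · j) ≤ (𝓝 (e z i)).comap (e · i) := by
    have hbond : Filter.Tendsto (S.bond h) (𝓝 (e z j)) (𝓝 (e z i)) :=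
      hcomp i j h z ▸ (S.bond_cont h).tendsto (e z j)
    simpa only [Filter.comap_comap, Function.comp_def, hcomp] using
      Filter.comap_mono (m := (e · j)) hbond.le_comap
  rw [hnhds]
  refine Filter.hasBasis_iInf_of_directed' (fun i V => (e · i) ⁻¹' V) _
    (fun i => (nhds_basis_opens (e z i)).comap (e · i)) ?_
  intro i j
  obtain ⟨k, hik, hjk⟩ := hφ i j
  exact ⟨k, hanti i k hik, hanti j k hjk⟩

theorem hasBasis_nhds_limitSet [IsDirectedOrder A] [Nonempty A] (z : S.limitSet) :
    (𝓝 z).HasBasis (fun p : Σ a, Set (S.X a) => S.proj p.1 z ∈ p.2 ∧ IsOpen p.2)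
      fun p => S.proj p.1 ⁻¹' p.2 :=
  S.hasBasis_nhds_of_isInducing directed_id IsInducing.subtypeVal (fun _ _ h z => S.bond_proj h z) z

theorem hasBasis_nhds_of_isInducing_toLimitOn {C : Set A} {g : A} (hC : C.Nonempty)
    (hdir : DirectedOn (· ≤ ·) C) (hg : IsLUB C g) (hind : IsInducing (S.toLimitOn hg))
    (x : S.X g) :
    (𝓝 x).HasBasis
      (fun p : Σ c : C, Set (S.X c) => S.bond (hg.1 p.1.2) x ∈ p.2 ∧ IsOpen p.2)
      fun p => S.bond (hg.1 p.1.2) ⁻¹' p.2 :=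
  have := hC.to_subtype
  S.hasBasis_nhds_of_isInducing hdir.directed_val (IsInducing.subtypeVal.comp hind)
    (fun _ d h z => S.bond_comp h (hg.1 d.2) z) x

end InvSpec

namespace SpecMor

variable {S T : InvSpec A} {F : SpecMor S T} {a b c : A}

/-- The index `b` *witnesses skeletality* over `a` if for each nonempty open `U ⊆ X a`, the
closure of the image of `p_a⁻¹(U)` under the limit map contains the nonempty preimage of an open
subset of `Y b`. Nonemptiness is required of the preimage, as projections need not have dense
range. -/
def SkeletalWitness (F : SpecMor S T) (a b : A) : Prop :=
  ∀ U : Set (S.X a), IsOpen U → U.Nonempty → ∃ V : Set (T.X b), IsOpen V ∧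
    (T.proj b ⁻¹' V).Nonempty ∧ T.proj b ⁻¹' V ⊆ closure (F.limMap '' (S.proj a ⁻¹' U))

theorem exists_isOpen_proj_preimage_subset_closure_image [IsDirectedOrder A] [Nonempty A]
    (hsk : Skeletal F.limMap) {W : Set S.limitSet} (hW : IsOpen W) (hne : W.Nonempty) :
    ∃ (b : A) (V : Set (T.X b)), IsOpen V ∧ (T.proj b ⁻¹' V).Nonempty ∧
      T.proj b ⁻¹' V ⊆ closure (F.limMap '' W) := by
  obtain ⟨y, hy⟩ := hsk W hW hne
  obtain ⟨⟨b, V⟩, ⟨hyV, hV⟩, hsub⟩ :=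
    (T.hasBasis_nhds_limitSet y).mem_iff.1 (mem_interior_iff_mem_nhds.1 hy)
  exact ⟨b, V, hV, ⟨y, hyV⟩, hsub⟩

theorem exists_ge_skeletalWitness [IsDirectedOrder A] {τ : Cardinal.{u}} (hA : CardDirected A τ)
    (hw : piWeight (S.X a) ≤ τ) (hS : DenseRange (S.proj a)) (hsk : Skeletal F.limMap) :
    ∃ b, a ≤ b ∧ F.SkeletalWitness a b := by
  have : Nonempty A := ⟨a⟩
  obtain ⟨P, ⟨hPopen, hPsub⟩, hcard⟩ := exists_isPiBase_mk_eq_piWeight (S.X a)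
  have hwitness (U : P) := exists_isOpen_proj_preimage_subset_closure_image hsk
    ((hPopen U U.2).1.preimage (S.continuous_proj a))
    (hS.exists_mem_open (hPopen U U.2).1 (hPopen U U.2).2)
  choose b V hV hne hVsub using hwitness
  obtain ⟨c, hc⟩ := hA (range b) (Cardinal.mk_range_le.trans (hcard.trans_le hw))
  obtain ⟨d, had, hcd⟩ := exists_ge_ge a c
  refine ⟨d, had, fun U hU hUne => ?_⟩
  obtain ⟨U', hU', hU'U⟩ := hPsub U hU hUne
  have hbd : b ⟨U', hU'⟩ ≤ d := (hc _ (mem_range_self _)).trans hcd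
  refine ⟨T.bond hbd ⁻¹' V ⟨U', hU'⟩, (hV _).preimage (T.bond_cont hbd), ?_, ?_⟩ <;>
    rw [T.proj_preimage_bond_preimage hbd]
  · exact hne _
  · exact (hVsub _).trans (closure_mono (image_mono (preimage_mono hU'U)))

theorem SkeletalWitness.exists_proj_preimage_subset_of_le (h : F.SkeletalWitness a b) (hac : a ≤ c)
    (hbc : b ≤ c) {U : Set (S.X a)} (hU : IsOpen U) (hne : U.Nonempty) :
    ∃ V : Set (T.X c), IsOpen V ∧ V.Nonempty ∧
      T.proj c ⁻¹' V ⊆ closure (F.limMap '' (S.proj c ⁻¹' (S.bond hac ⁻¹' U))) := by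
  obtain ⟨V, hV, ⟨y, hy⟩, hVU⟩ := h U hU hne
  rw [← T.proj_preimage_bond_preimage hbc] at hy hVU
  rw [← S.proj_preimage_bond_preimage hac] at hVU
  exact ⟨T.bond hbc ⁻¹' V, hV.preimage (T.bond_cont hbc), ⟨T.proj c y, hy⟩, hVU⟩

theorem limitSquareSkeletal_of_isLUB {C : Set A} {g : A} (hC : C.Nonempty)
    (hdir : DirectedOn (· ≤ ·) C) (hg : IsLUB C g) (hind : IsInducing (S.toLimitOn hg))
    (hT : DenseRange (T.proj g)) (hwitness : ∀ c ∈ C, ∃ d ∈ C, F.SkeletalWitness c d) :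
    LimitSquareSkeletal F g := by
  intro x U hU
  obtain ⟨⟨⟨c, hc⟩, U'⟩, ⟨hxU', hU'⟩, hU'U⟩ :=
    (S.hasBasis_nhds_of_isInducing_toLimitOn hC hdir hg hind x).mem_iff.1 hU
  obtain ⟨d, hd, hcd⟩ := hwitness c hc
  obtain ⟨V, hV, hne, hVU'⟩ :=
    hcd.exists_proj_preimage_subset_of_le (hg.1 hc) (hg.1 hd) hU' ⟨_, hxU'⟩
  have hVU : T.proj g ⁻¹' V ⊆ closure (F.limMap '' (S.proj g ⁻¹' U)) :=
    hVU'.trans (closure_mono (image_mono (preimage_mono hU'U)))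
  have hcomm : T.proj g ∘ F.limMap = F.maps g ∘ S.proj g := rfl
  exact ⟨V, hV, hne, subset_closure_image_of_preimage_subset_closure_image hcomm
    (T.continuous_proj g) hT hV hVU, hVU⟩

end SpecMor

theorem cofinal_limitSquareSkeletal_general [IsDirectedOrder A] {τ : Cardinal.{u}}
    {S T : InvSpec A} {F : SpecMor S T} (hSτ : IsPiTauSpectrum τ S)
    (hS : ∀ a, DenseRange (S.proj a)) (hT : ∀ a, DenseRange (T.proj a))
    (hsk : Skeletal F.limMap) : IsCofinalSub {a : A | LimitSquareSkeletal F a} := by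
  intro a
  obtain ⟨hw, hA, hω, hcont⟩ := hSτ
  have hwitness (c : A) : ∃ d, c ≤ d ∧ F.SkeletalWitness c d :=
    SpecMor.exists_ge_skeletalWitness hA (hw c) (hS c) hsk
  obtain ⟨s, g, hmono, rfl, hs, hg⟩ := hω.exists_isLUB_range_of_forall_exists_ge hwitness a
  have hdir : DirectedOn (· ≤ ·) (range s) := hmono.directed_le.directedOn_range
  refine ⟨g, ?_, hg.1 (mem_range_self 0)⟩
  refine SpecMor.limitSquareSkeletal_of_isLUB (range_nonempty s) hdir hg
    (hcont _ g (range_nonempty s) hdir hg).isInducing (hT g) ?_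
  rintro _ ⟨n, rfl⟩
  exact ⟨s (n + 1), mem_range_self _, hs n⟩

/-- If the limit map of a morphism between two πτ-spectra with surjective limit projections
is skeletal, then the set `B = {a : the limit ↓a-square is skeletal}` is cofinal in the
index set. -/
theorem cofinal_limitSquareSkeletal {A : Type u} [PartialOrder A] [Nonempty A]
    (τ : Cardinal.{u}) (hτ : Cardinal.aleph0 ≤ τ) (S T : InvSpec A) (F : SpecMor S T)
    (hSτ : IsPiTauSpectrum τ S) (hTτ : IsPiTauSpectrum τ T)
    (hS : ∀ a : A, Function.Surjective (S.proj a))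
    (hT : ∀ a : A, Function.Surjective (T.proj a))
    (hsk : Skeletal F.limMap) :
    IsCofinalSub {a : A | LimitSquareSkeletal F a} := by
  have : IsDirectedOrder A := hSτ.2.1.isDirectedOrder (Cardinal.ofNat_lt_aleph0.le.trans hτ)
  exact cofinal_limitSquareSkeletal_general hSτ (fun a => (hS a).denseRange)
    (fun a => (hT a).denseRange) hsk
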